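/- arXiv:2511.07259 — 5 statements merged into one kernel-verified Lean document; each statement's English description precedes it below -/
import Mathlib

section
/- For any μ ≥ 1 and σ > 0, ∫_{-1}^{1} (t²)^{2μ-2} e^{-(1/2)(t²/σ²)^{μ}} dt = (1/μ) γ^mod((4μ-3)/(2μ), 1/(2σ^{2μ})). Consequently, the function k̃_{σ,μ}(t) = [μ / γ^mod((4μ-3)/(2μ), 1/(2σ^{2μ}))] (t²)^{2μ-2} e^{-(1/2)(t²/σ²)^{μ}} is a probability density function on [-1,1], i.e. it is nonnegative and integrates to 1 over [-1,1]. -/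
open MeasureTheory

/-- Lower incomplete gamma function `γ(s,z) = ∫₀^z u^(s-1) e^(-u) du`. -/
noncomputable def lowGamma (s z : ℝ) : ℝ := ∫ u in (0:ℝ)..z, u ^ (s - 1) * Real.exp (-u)

/-- Modified lower incomplete gamma function `γ^mod(s,z) = γ(s,z)/z^s`. -/
noncomputable def gammaMod (s z : ℝ) : ℝ := lowGamma s z / z ^ s

/-- First family of densities `k̃_{σ,μ}` on `[-1,1]`. -/
noncomputable def kTilde (σ μ t : ℝ) : ℝ :=
  (μ / gammaMod ((4 * μ - 3) / (2 * μ)) (1 / (2 * σ ^ (2 * μ)))) *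
    (t ^ 2) ^ (2 * μ - 2) * Real.exp (-(1 / 2) * (t ^ 2 / σ ^ 2) ^ μ)

/-!
The weight is a function of `|t|`, so its integral over `[-1, 1]` is twice the integral over
`[0, 1]`, and there the substitution `u = t ^ (2 * μ) / (2 * σ ^ (2 * μ))` turns it into a lower
incomplete gamma integral. The resulting constant is positive because its parameter
`(4 * μ - 3) / (2 * μ)` is, so dividing by it yields a density.
-/

theorem lowGamma_pos {s z : ℝ} (hs : 0 < s) (hz : 0 < z) : 0 < lowGamma s z := by
  refine intervalIntegral.intervalIntegral_pos_of_pos_on ?_ (fun u hu => ?_) hz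
  · exact (intervalIntegral.intervalIntegrable_rpow' (by linarith)).mul_continuousOn
      (by fun_prop)
  · have hu_pos : 0 < u := hu.1
    positivity

theorem gammaMod_pos {s z : ℝ} (hs : 0 < s) (hz : 0 < z) : 0 < gammaMod s z :=
  div_pos (lowGamma_pos hs hz) (Real.rpow_pos_of_pos hz s)

theorem lowGamma_mul_rpow {p c b : ℝ} (s : ℝ) (hp : 0 < p) (hc : 0 < c) (hb : 0 ≤ b) :
    lowGamma s (c * b ^ p) =
      p * c ^ s * ∫ t in (0:ℝ)..b, t ^ (p * s - 1) * Real.exp (-(c * t ^ p)) := by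
  have pos_of_mem {t : ℝ} (ht : t ∈ Set.Ioo (min 0 b) (max 0 b)) : 0 < t := by
    simpa only [min_eq_left hb] using ht.1
  have substitution := intervalIntegral.integral_comp_mul_deriv_of_deriv_nonneg
    (a := 0) (b := b) (f := fun t => c * t ^ p) (f' := fun t => c * (p * t ^ (p - 1)))
    (g := fun u => u ^ (s - 1) * Real.exp (-u))
    (continuous_const.mul (Real.continuous_rpow_const hp.le)).continuousOn
    (fun t ht => (Real.hasDerivAt_rpow_const (Or.inl (pos_of_mem ht).ne')).const_mul c)
    (fun t ht => by
      have ht_pos := pos_of_mem ht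
      positivity)
  have integrand_eq (t : ℝ) (ht : 0 < t) :
      (c * t ^ p) ^ (s - 1) * Real.exp (-(c * t ^ p)) * (c * (p * t ^ (p - 1))) =
        p * c ^ s * (t ^ (p * s - 1) * Real.exp (-(c * t ^ p))) := by
    have t_powers : t ^ (p * s - 1) = t ^ (p * (s - 1)) * t ^ (p - 1) := by
      rw [← Real.rpow_add ht]
      ring_nf
    have c_powers : c ^ s = c ^ (s - 1) * c := by
      rw [← Real.rpow_add_one hc.ne', sub_add_cancel]
    rw [Real.mul_rpow hc.le (Real.rpow_nonneg ht.le p), ← Real.rpow_mul ht.le, t_powers, c_powers]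
    ring
  rw [Real.zero_rpow hp.ne', mul_zero] at substitution
  rw [lowGamma, ← substitution, ← intervalIntegral.integral_const_mul]
  refine intervalIntegral.integral_congr_ae (.of_forall fun t ht => ?_)
  rw [Set.uIoc_of_le hb] at ht
  exact integrand_eq t ht.1

theorem integral_rpow_mul_exp_neg_mul_rpow_eq_gammaMod {p c : ℝ} (s : ℝ) (hp : 0 < p)
    (hc : 0 < c) :
    ∫ t in (0:ℝ)..1, t ^ (p * s - 1) * Real.exp (-(c * t ^ p)) = 1 / p * gammaMod s c := by
  have scaled := lowGamma_mul_rpow s hp hc zero_le_one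
  rw [Real.one_rpow, mul_one] at scaled
  rw [gammaMod, scaled]
  field_simp

theorem intervalIntegral_comp_abs_neg_self {a : ℝ} (f : ℝ → ℝ) (ha : 0 ≤ a) :
    ∫ t in (-a)..a, f |t| = 2 * ∫ t in (0:ℝ)..a, f t := by
  have indicator_comp_abs (t : ℝ) :
      (Set.Icc (-a) a).indicator (fun x => f |x|) t = (Set.Iic a).indicator f |t| := by
    simp only [Set.indicator, Set.mem_Icc, Set.mem_Iic, abs_le]
  calc
    ∫ t in (-a)..a, f |t| = ∫ t, (Set.Iic a).indicator f |t| := by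
      rw [intervalIntegral.integral_of_le (neg_le_self ha), ← integral_Icc_eq_integral_Ioc,
        ← integral_indicator measurableSet_Icc]
      simp only [indicator_comp_abs]
    _ = 2 * ∫ t in Set.Ioi 0, (Set.Iic a).indicator f t := integral_comp_abs
    _ = 2 * ∫ t in (0:ℝ)..a, f t := by
      rw [setIntegral_indicator measurableSet_Iic, Set.Ioi_inter_Iic,
        intervalIntegral.integral_of_le ha]

theorem sq_rpow_eq_abs_rpow (t r : ℝ) : (t ^ 2) ^ r = |t| ^ (2 * r) := by
  rw [← sq_abs, ← Real.rpow_natCast_mul (abs_nonneg t), Nat.cast_ofNat]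

theorem sq_div_sq_rpow {σ : ℝ} (hσ : 0 ≤ σ) (t μ : ℝ) :
    (t ^ 2 / σ ^ 2) ^ μ = |t| ^ (2 * μ) / σ ^ (2 * μ) := by
  rw [Real.div_rpow (sq_nonneg t) (sq_nonneg σ), sq_rpow_eq_abs_rpow, sq_rpow_eq_abs_rpow,
    abs_of_nonneg hσ]

theorem integral_sq_rpow_mul_exp_eq_gammaMod {σ μ : ℝ} (hσ : 0 < σ) (hμ : 0 < μ) :
    ∫ t in (-1:ℝ)..1, (t ^ 2) ^ (2 * μ - 2) * Real.exp (-(1 / 2) * (t ^ 2 / σ ^ 2) ^ μ) =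
      (1 / μ) * gammaMod ((4 * μ - 3) / (2 * μ)) (1 / (2 * σ ^ (2 * μ))) := by
  set s := (4 * μ - 3) / (2 * μ) with hs
  set z := 1 / (2 * σ ^ (2 * μ)) with hz
  have exponent_eq : 2 * (2 * μ - 2) = 2 * μ * s - 1 := by
    rw [hs]
    field_simp
    ring
  have integrand_eq (t : ℝ) :
      (t ^ 2) ^ (2 * μ - 2) * Real.exp (-(1 / 2) * (t ^ 2 / σ ^ 2) ^ μ) =
        |t| ^ (2 * μ * s - 1) * Real.exp (-(z * |t| ^ (2 * μ))) := by
    rw [sq_rpow_eq_abs_rpow, sq_div_sq_rpow hσ.le, exponent_eq, hz]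
    ring_nf
  have hz_pos : 0 < z := by positivity
  simp only [integrand_eq]
  rw [intervalIntegral_comp_abs_neg_self
      (fun t => t ^ (2 * μ * s - 1) * Real.exp (-(z * t ^ (2 * μ)))) zero_le_one,
    integral_rpow_mul_exp_neg_mul_rpow_eq_gammaMod s (by positivity) hz_pos]
  ring

-- The weight behaves like `|t| ^ (4 * μ - 4)` at the origin, hence the threshold `3 / 4`.
theorem kTilde_is_pdf_general {σ μ : ℝ} (hσ : 0 < σ) (hμ : 3 / 4 < μ) :
    (∫ t in (-1:ℝ)..1, (t ^ 2) ^ (2 * μ - 2) * Real.exp (-(1 / 2) * (t ^ 2 / σ ^ 2) ^ μ)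
        = (1 / μ) * gammaMod ((4 * μ - 3) / (2 * μ)) (1 / (2 * σ ^ (2 * μ)))) ∧
    (∀ t, 0 ≤ kTilde σ μ t) ∧
    (∫ t in (-1:ℝ)..1, kTilde σ μ t = 1) := by
  have hμ_pos : 0 < μ := by linarith
  have normalizer_pos : 0 < gammaMod ((4 * μ - 3) / (2 * μ)) (1 / (2 * σ ^ (2 * μ))) :=
    gammaMod_pos (div_pos (by linarith) (by positivity)) (by positivity)
  have weight_integral := integral_sq_rpow_mul_exp_eq_gammaMod hσ hμ_pos
  refine ⟨weight_integral, fun t => ?_, ?_⟩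
  · unfold kTilde
    positivity
  · simp only [kTilde, mul_assoc (μ / gammaMod _ _)]
    rw [intervalIntegral.integral_const_mul, weight_integral, one_div_mul_eq_div, ← inv_div μ,
      mul_inv_cancel₀ (div_pos hμ_pos normalizer_pos).ne']

/-- For `μ ≥ 1`, `σ > 0`:
`∫_{-1}^{1} (t²)^{2μ-2} e^{-(1/2)(t²/σ²)^μ} dt = (1/μ) γ^mod((4μ-3)/(2μ), 1/(2σ^{2μ}))`,
and `k̃_{σ,μ}` is a probability density function on `[-1,1]`. -/
theorem kTilde_is_pdf (σ μ : ℝ) (hσ : 0 < σ) (hμ : 1 ≤ μ) :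
    (∫ t in (-1:ℝ)..1, (t ^ 2) ^ (2 * μ - 2) * Real.exp (-(1 / 2) * (t ^ 2 / σ ^ 2) ^ μ)
        = (1 / μ) * gammaMod ((4 * μ - 3) / (2 * μ)) (1 / (2 * σ ^ (2 * μ)))) ∧
    (∀ t ∈ Set.Icc (-1:ℝ) 1, 0 ≤ kTilde σ μ t) ∧
    (∫ t in (-1:ℝ)..1, kTilde σ μ t = 1) := by
  obtain ⟨weight_integral, kTilde_nonneg, kTilde_integral⟩ :=
    kTilde_is_pdf_general hσ (by linarith : 3 / 4 < μ)
  exact ⟨weight_integral, fun t _ => kTilde_nonneg t, kTilde_integral⟩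
end

section
/- For any μ ≥ 1, σ > 0, and integer m ≥ 0, the m-th moment t_{m,σ,μ} = ∫_{-1}^{1} t^m k̃_{σ,μ}(t) dt satisfies: t_{m,σ,μ} = 0 if m is odd, and t_{2k,σ,μ} = γ^mod((2k+4μ-3)/(2μ), 1/(2σ^{2μ})) / γ^mod((4μ-3)/(2μ), 1/(2σ^{2μ})) if m = 2k is even. -/
open MeasureTheory

/-! The substitution `u = z * t ^ a` turns `γ^mod(s, z)` into
`a * ∫₀¹ t ^ (a * s - 1) * exp (-z * t ^ a)`. With `a = 2 * μ` and `z = 1 / (2 * σ ^ (2 * μ))`, the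
exponential becomes that of `k̃_{σ,μ}`, and the `p`-th absolute moment corresponds to
`a * s - 1 = p + 4 * μ - 4`, that is `s = (p + 4 * μ - 3) / (2 * μ)`. Since `k̃_{σ,μ}` is even, its
even moments are absolute moments and its odd moments vanish. -/

section Parity

variable {E : Type*} [NormedAddCommGroup E] [NormedSpace ℝ E] {f : ℝ → E}

theorem integral_neg_self_eq_zero_of_odd (hf : f.Odd) (a : ℝ) : ∫ t in -a..a, f t = 0 := by
  have h : ∫ t in -a..a, f t = -∫ t in -a..a, f t := by
    simpa [hf _] using (intervalIntegral.integral_comp_neg (a := -a) (b := a) f).symm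
  have : IsAddTorsionFree E := .of_isTorsionFree ℝ E
  exact self_eq_neg.mp h

theorem integral_neg_self_eq_two_smul_of_even (hf : f.Even) {a : ℝ}
    (hint : IntervalIntegrable f volume 0 a) :
    ∫ t in -a..a, f t = (2 : ℝ) • ∫ t in 0..a, f t := by
  have hint_neg : IntervalIntegrable f volume (-a) 0 := by
    simpa [hf _] using ((IntervalIntegrable.iff_comp_neg (f := f)).mp hint).symm
  have hneg : ∫ t in -a..0, f t = ∫ t in 0..a, f t := by
    simpa [hf _] using (intervalIntegral.integral_comp_neg (a := 0) (b := a) f).symm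
  rw [← intervalIntegral.integral_add_adjacent_intervals hint_neg hint, hneg, two_smul]

end Parity

theorem lowGamma_eq_integral_zero_one (s : ℝ) {a z : ℝ} (ha : 0 < a) (hz : 0 < z) :
    lowGamma s z =
      a * z ^ s * ∫ t in (0 : ℝ)..1, t ^ (a * s - 1) * Real.exp (-(z * t ^ a)) := by
  have hpos {t : ℝ} (ht : t ∈ Set.uIoo 0 1) : 0 < t := by simp_all
  have hsubst :
      ∫ t in (0 : ℝ)..1, (z * t ^ a) ^ (s - 1) * Real.exp (-(z * t ^ a)) *
        (z * (a * t ^ (a - 1))) = lowGamma s z := by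
    have h := intervalIntegral.integral_comp_mul_deriv_of_deriv_nonneg (a := 0) (b := 1)
      (f := fun t ↦ z * t ^ a) (f' := fun t ↦ z * (a * t ^ (a - 1)))
      (g := fun u ↦ u ^ (s - 1) * Real.exp (-u))
      (continuous_const.mul (Real.continuous_rpow_const ha.le)).continuousOn
      (fun t ht ↦ (Real.hasDerivAt_rpow_const (Or.inl (hpos ht).ne')).const_mul z)
      (fun t ht ↦ by have := hpos ht; positivity)
    simpa [lowGamma, ha.ne'] using h
  rw [← hsubst, ← intervalIntegral.integral_const_mul]
  refine intervalIntegral.integral_congr_uIoo fun t ht ↦ ?_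
  have ht0 := hpos ht
  have hz_pow : z ^ s = z ^ (s - 1) * z := by
    rw [← Real.rpow_add_one hz.ne', sub_add_cancel]
  have ht_pow : t ^ (a * s - 1) = t ^ (a * (s - 1)) * t ^ (a - 1) := by
    rw [← Real.rpow_add ht0]
    ring_nf
  rw [Real.mul_rpow hz.le (by positivity), ← Real.rpow_mul ht0.le, hz_pow, ht_pow]
  ring

theorem gammaMod_eq_integral_zero_one (s : ℝ) {a z : ℝ} (ha : 0 < a) (hz : 0 < z) :
    gammaMod s z = a * ∫ t in (0 : ℝ)..1, t ^ (a * s - 1) * Real.exp (-(z * t ^ a)) := by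
  have := (Real.rpow_pos_of_pos hz s).ne'
  rw [gammaMod, lowGamma_eq_integral_zero_one s ha hz]
  field_simp

theorem kTilde_even (σ μ : ℝ) : (kTilde σ μ).Even := fun t ↦ by simp [kTilde]

theorem integral_pow_mul_kTilde_of_odd (σ μ : ℝ) {m : ℕ} (hm : Odd m) :
    ∫ t in (-1 : ℝ)..1, t ^ m * kTilde σ μ t = 0 :=
  integral_neg_self_eq_zero_of_odd
    (fun t ↦ by simp only [hm.neg_pow, kTilde_even σ μ t, neg_mul]) 1

section AbsoluteMoments

variable {σ μ : ℝ}

theorem rpow_mul_kTilde (hσ : 0 < σ) (p : ℝ) {t : ℝ} (ht : 0 < t) :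
    t ^ p * kTilde σ μ t =
      μ / gammaMod ((4 * μ - 3) / (2 * μ)) (1 / (2 * σ ^ (2 * μ))) *
        (t ^ (p + 4 * μ - 4) * Real.exp (-(1 / (2 * σ ^ (2 * μ)) * t ^ (2 * μ)))) := by
  have sq_rpow {x : ℝ} (hx : 0 < x) (q : ℝ) : (x ^ 2) ^ q = x ^ (2 * q) :=
    mod_cast (Real.rpow_natCast_mul hx.le 2 q).symm
  have hpow : t ^ (p + 4 * μ - 4) = t ^ p * (t ^ 2) ^ (2 * μ - 2) := by
    rw [sq_rpow ht, ← Real.rpow_add ht]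
    ring_nf
  have hexp : -(1 / 2) * (t ^ 2 / σ ^ 2) ^ μ = -(1 / (2 * σ ^ (2 * μ)) * t ^ (2 * μ)) := by
    rw [Real.div_rpow (sq_nonneg t) (sq_nonneg σ), sq_rpow ht, sq_rpow hσ]
    field_simp
  rw [kTilde, hpow, hexp]
  ring

theorem integral_zero_one_rpow_mul_kTilde (hσ : 0 < σ) (hμ : 0 < μ) (p : ℝ) :
    ∫ t in (0 : ℝ)..1, t ^ p * kTilde σ μ t =
      gammaMod ((p + 4 * μ - 3) / (2 * μ)) (1 / (2 * σ ^ (2 * μ))) /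
        gammaMod ((4 * μ - 3) / (2 * μ)) (1 / (2 * σ ^ (2 * μ))) / 2 := by
  have hexponent : 2 * μ * ((p + 4 * μ - 3) / (2 * μ)) - 1 = p + 4 * μ - 4 := by
    field_simp
    ring
  rw [intervalIntegral.integral_congr_uIoo fun t ht ↦ rpow_mul_kTilde hσ p (by simp_all),
    intervalIntegral.integral_const_mul,
    gammaMod_eq_integral_zero_one ((p + 4 * μ - 3) / (2 * μ)) (a := 2 * μ) (by positivity)
      (by positivity), hexponent]
  ring

theorem intervalIntegrable_rpow_mul_kTilde (hσ : 0 < σ) (hμ : 0 ≤ μ) {p : ℝ}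
    (hp : 3 < p + 4 * μ) :
    IntervalIntegrable (fun t ↦ t ^ p * kTilde σ μ t) volume 0 1 := by
  have hexp : Continuous fun t : ℝ ↦ Real.exp (-(1 / (2 * σ ^ (2 * μ)) * t ^ (2 * μ))) := by
    have := Real.continuous_rpow_const (q := 2 * μ) (by positivity)
    fun_prop
  have hpow : IntervalIntegrable (fun t : ℝ ↦ t ^ (p + 4 * μ - 4)) volume 0 1 :=
    intervalIntegral.intervalIntegrable_rpow' (by linarith)
  rw [intervalIntegrable_congr_uIoo fun t ht ↦ rpow_mul_kTilde hσ p (by simp_all)]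
  exact (hpow.mul_continuousOn hexp.continuousOn).const_mul _

theorem integral_abs_rpow_mul_kTilde (hσ : 0 < σ) (hμ : 0 < μ) {p : ℝ} (hp : 3 < p + 4 * μ) :
    ∫ t in (-1 : ℝ)..1, |t| ^ p * kTilde σ μ t =
      gammaMod ((p + 4 * μ - 3) / (2 * μ)) (1 / (2 * σ ^ (2 * μ))) /
        gammaMod ((4 * μ - 3) / (2 * μ)) (1 / (2 * σ ^ (2 * μ))) := by
  have heven : Function.Even fun t : ℝ ↦ |t| ^ p * kTilde σ μ t := fun t ↦ by
    simp only [abs_neg, kTilde_even σ μ t]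
  have habs : Set.EqOn (fun t : ℝ ↦ t ^ p * kTilde σ μ t) (fun t ↦ |t| ^ p * kTilde σ μ t)
      (Set.uIoo 0 1) := fun t ht ↦ by
    simp_all [abs_of_pos]
  rw [integral_neg_self_eq_two_smul_of_even heven
      ((intervalIntegrable_rpow_mul_kTilde hσ hμ.le hp).congr_uIoo habs),
    ← intervalIntegral.integral_congr_uIoo habs, integral_zero_one_rpow_mul_kTilde hσ hμ,
    smul_eq_mul, mul_div_cancel₀ _ two_ne_zero]

end AbsoluteMoments

theorem kTilde_moments_general (σ μ : ℝ) (hσ : 0 < σ) (hμ : 3 / 4 < μ) (m : ℕ) :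
    (Odd m → ∫ t in (-1:ℝ)..1, t ^ m * kTilde σ μ t = 0) ∧
    (∀ k : ℕ, m = 2 * k →
      ∫ t in (-1:ℝ)..1, t ^ m * kTilde σ μ t
        = gammaMod ((2 * (k:ℝ) + 4 * μ - 3) / (2 * μ)) (1 / (2 * σ ^ (2 * μ)))
          / gammaMod ((4 * μ - 3) / (2 * μ)) (1 / (2 * σ ^ (2 * μ)))) := by
  refine ⟨integral_pow_mul_kTilde_of_odd σ μ, ?_⟩
  rintro k rfl
  have habs (t : ℝ) : |t| ^ (2 * (k : ℝ)) = t ^ (2 * k) :=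
    mod_cast (Real.rpow_natCast |t| (2 * k)).trans ((even_two_mul k).pow_abs t)
  have hp : 3 < 2 * (k : ℝ) + 4 * μ := by linarith [k.cast_nonneg (α := ℝ)]
  simpa only [habs] using integral_abs_rpow_mul_kTilde hσ (by linarith) hp

/-- Moments of `k̃_{σ,μ}`: the odd moments vanish and the even moments are
ratios of modified incomplete gamma functions. -/
theorem kTilde_moments (σ μ : ℝ) (hσ : 0 < σ) (hμ : 1 ≤ μ) (m : ℕ) :
    (Odd m → ∫ t in (-1:ℝ)..1, t ^ m * kTilde σ μ t = 0) ∧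
    (∀ k : ℕ, m = 2 * k →
      ∫ t in (-1:ℝ)..1, t ^ m * kTilde σ μ t
        = gammaMod ((2 * (k:ℝ) + 4 * μ - 3) / (2 * μ)) (1 / (2 * σ ^ (2 * μ)))
          / gammaMod ((4 * μ - 3) / (2 * μ)) (1 / (2 * σ ^ (2 * μ)))) := by
  exact kTilde_moments_general σ μ hσ (by linarith) m
end

section
/- For any fixed μ ≥ 1 and any t ∈ [-1,1], the pointwise limit as σ → ∞ of k̃_{σ,μ}(t) exists and equals ((4μ-3)/2) (t²)^{2μ-2}; in particular the limiting function is a beta-type probability density on [-1,1]. -/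
open MeasureTheory Filter

/-!
On `[0, z]` the factor `exp (-u)` lies between `exp (-z)` and `1`, so `lowGamma s z` lies between
`exp (-z) * z ^ s / s` and `z ^ s / s`, and hence `gammaMod s z → s⁻¹` as `z → 0⁺`. With
`s = (4 * μ - 3) / (2 * μ)`, the normalising factor `μ / gammaMod s z` of `kTilde` therefore tends
to `μ * s = (4 * μ - 3) / 2` as `σ → ∞`, while the exponential factor tends to `1`.
-/

open scoped Topology

section IncompleteGamma

variable {s z : ℝ}

theorem integral_rpow_sub_one (hs : 0 < s) : ∫ u in (0 : ℝ)..z, u ^ (s - 1) = z ^ s / s := by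
  rw [integral_rpow (Or.inl (by linarith)), sub_add_cancel, Real.zero_rpow hs.ne', sub_zero]

theorem intervalIntegrable_rpow_sub_one_mul_exp_neg (hs : 0 < s) :
    IntervalIntegrable (fun u : ℝ => u ^ (s - 1) * Real.exp (-u)) volume 0 z :=
  (intervalIntegral.intervalIntegrable_rpow' (by linarith)).mul_continuousOn (by fun_prop)

theorem rpow_div_mul_exp_neg_le_lowGamma (hs : 0 < s) (hz : 0 ≤ z) :
    z ^ s / s * Real.exp (-z) ≤ lowGamma s z := by
  rw [← integral_rpow_sub_one hs, ← intervalIntegral.integral_mul_const]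
  refine intervalIntegral.integral_mono_on hz
    ((intervalIntegral.intervalIntegrable_rpow' (by linarith)).mul_const _)
    (intervalIntegrable_rpow_sub_one_mul_exp_neg hs) fun u hu => ?_
  have hu_nonneg : 0 ≤ u := hu.1
  have hu_le : u ≤ z := hu.2
  gcongr

theorem lowGamma_le_rpow_div (hs : 0 < s) (hz : 0 ≤ z) : lowGamma s z ≤ z ^ s / s := by
  rw [← integral_rpow_sub_one hs]
  exact intervalIntegral.integral_mono_on hz (intervalIntegrable_rpow_sub_one_mul_exp_neg hs)
    (intervalIntegral.intervalIntegrable_rpow' (by linarith)) fun u hu =>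
      mul_le_of_le_one_right (Real.rpow_nonneg hu.1 _) (Real.exp_le_one_iff.2 (neg_nonpos.2 hu.1))

theorem exp_neg_div_le_gammaMod (hs : 0 < s) (hz : 0 < z) : Real.exp (-z) / s ≤ gammaMod s z := by
  rw [gammaMod, le_div_iff₀ (Real.rpow_pos_of_pos hz s), div_mul_comm]
  exact rpow_div_mul_exp_neg_le_lowGamma hs hz.le

theorem gammaMod_le_inv (hs : 0 < s) (hz : 0 < z) : gammaMod s z ≤ s⁻¹ := by
  rw [gammaMod, div_le_iff₀ (Real.rpow_pos_of_pos hz s), inv_mul_eq_div]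
  exact lowGamma_le_rpow_div hs hz.le

theorem tendsto_gammaMod_nhdsGT_zero (hs : 0 < s) : Tendsto (gammaMod s) (𝓝[>] 0) (𝓝 s⁻¹) := by
  have lower_tendsto : Tendsto (fun z => Real.exp (-z) / s) (𝓝[>] 0) (𝓝 s⁻¹) := by
    have cont : Continuous fun z => Real.exp (-z) / s := by fun_prop
    exact (cont.tendsto' 0 s⁻¹ (by simp)).mono_left nhdsWithin_le_nhds
  refine tendsto_of_tendsto_of_tendsto_of_le_of_le' lower_tendsto tendsto_const_nhds ?_ ?_
  · filter_upwards [self_mem_nhdsWithin] with z hz using exp_neg_div_le_gammaMod hs hz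
  · filter_upwards [self_mem_nhdsWithin] with z hz using gammaMod_le_inv hs hz

end IncompleteGamma

section Limit

variable {μ : ℝ}

theorem tendsto_one_div_two_mul_rpow_atTop {p : ℝ} (hp : 0 < p) :
    Tendsto (fun σ : ℝ => 1 / (2 * σ ^ p)) atTop (𝓝[>] 0) := by
  simp only [one_div]
  exact tendsto_inv_atTop_nhdsGT_zero.comp ((tendsto_rpow_atTop hp).const_mul_atTop two_pos)

theorem tendsto_exp_const_mul_rpow {α : Type*} {l : Filter α} {f : α → ℝ} {p : ℝ}
    (hf : Tendsto f l (𝓝 0)) (hp : 0 < p) (c : ℝ) :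
    Tendsto (fun x => Real.exp (c * f x ^ p)) l (𝓝 1) := by
  have exponent_tendsto := (hf.rpow_const (Or.inr hp.le)).const_mul c
  rw [Real.zero_rpow hp.ne', mul_zero] at exponent_tendsto
  simpa only [Real.exp_zero] using exponent_tendsto.rexp

theorem tendsto_kTilde_normalization (hμ : 3 / 4 < μ) :
    Tendsto (fun σ : ℝ => μ / gammaMod ((4 * μ - 3) / (2 * μ)) (1 / (2 * σ ^ (2 * μ)))) atTop
      (𝓝 ((4 * μ - 3) / 2)) := by
  have hμ_pos : 0 < μ := by linarith
  have hs : 0 < (4 * μ - 3) / (2 * μ) := div_pos (by linarith) (mul_pos two_pos hμ_pos)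
  have gammaMod_tendsto := (tendsto_gammaMod_nhdsGT_zero hs).comp
    (tendsto_one_div_two_mul_rpow_atTop (mul_pos two_pos hμ_pos))
  have limit_eq : μ / ((4 * μ - 3) / (2 * μ))⁻¹ = (4 * μ - 3) / 2 := by field_simp
  rw [← limit_eq]
  exact tendsto_const_nhds.div gammaMod_tendsto (inv_ne_zero hs.ne')

theorem tendsto_kTilde_atTop (hμ : 3 / 4 < μ) (t : ℝ) :
    Tendsto (fun σ : ℝ => kTilde σ μ t) atTop (𝓝 ((4 * μ - 3) / 2 * (t ^ 2) ^ (2 * μ - 2))) := by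
  have quotient_tendsto : Tendsto (fun σ : ℝ => t ^ 2 / σ ^ 2) atTop (𝓝 0) :=
    tendsto_const_nhds.div_atTop (tendsto_pow_atTop two_ne_zero)
  have exp_tendsto := tendsto_exp_const_mul_rpow quotient_tendsto (p := μ) (by linarith) (-(1 / 2))
  simpa only [kTilde, mul_one] using
    ((tendsto_kTilde_normalization hμ).mul_const ((t ^ 2) ^ (2 * μ - 2))).mul exp_tendsto

end Limit

section BetaDensity

theorem integral_neg_self_of_even {E : Type*} [NormedAddCommGroup E] [NormedSpace ℝ E] {f : ℝ → E}
    {a : ℝ} (hf : f.Even) (hfi : IntervalIntegrable f volume 0 a) :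
    ∫ x in -a..a, f x = (2 : ℝ) • ∫ x in (0 : ℝ)..a, f x := by
  have left_half : ∫ x in -a..0, f x = ∫ x in (0 : ℝ)..a, f x := by
    simpa only [hf _, neg_zero] using (intervalIntegral.integral_comp_neg f (a := 0) (b := a)).symm
  have left_integrable : IntervalIntegrable f volume (-a) 0 := by
    simpa only [hf _, neg_zero] using (IntervalIntegrable.iff_comp_neg (f := f)).mp hfi.symm
  rw [← intervalIntegral.integral_add_adjacent_intervals left_integrable hfi, left_half, two_smul]

theorem integral_sq_rpow {p a : ℝ} (hp : -1 < 2 * p) (ha : 0 ≤ a) :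
    ∫ t in -a..a, (t ^ 2) ^ p = 2 * (a ^ (2 * p + 1) / (2 * p + 1)) := by
  have sq_rpow_eqOn : Set.EqOn (fun t : ℝ => t ^ (2 * p)) (fun t => (t ^ 2) ^ p)
      (Set.uIcc 0 a) := by
    intro t ht
    rw [Set.uIcc_of_le ha] at ht
    exact_mod_cast Real.rpow_natCast_mul ht.1 2 p
  have integrable : IntervalIntegrable (fun t : ℝ => (t ^ 2) ^ p) volume 0 a :=
    (intervalIntegral.intervalIntegrable_rpow' hp).congr
      (sq_rpow_eqOn.mono Set.uIoc_subset_uIcc)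
  have even : Function.Even fun t : ℝ => (t ^ 2) ^ p := fun t => by simp only [neg_sq]
  rw [integral_neg_self_of_even even integrable, ← intervalIntegral.integral_congr sq_rpow_eqOn,
    integral_rpow (Or.inl hp), Real.zero_rpow (by linarith), sub_zero, smul_eq_mul]

theorem integral_beta_density {μ : ℝ} (hμ : 3 / 4 < μ) :
    ∫ t in (-1 : ℝ)..1, (4 * μ - 3) / 2 * (t ^ 2) ^ (2 * μ - 2) = 1 := by
  have hμ' : 4 * μ - 3 ≠ 0 := by linarith
  rw [intervalIntegral.integral_const_mul, integral_sq_rpow (by linarith) zero_le_one,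
    Real.one_rpow, show 2 * (2 * μ - 2) + 1 = 4 * μ - 3 by ring]
  field_simp

end BetaDensity

-- For `μ < 1` the density has a pole at `t = 0`, where `Real.rpow` takes the junk value `0`.
theorem kTilde_tendsto_beta_general {μ : ℝ} (hμ : 3 / 4 < μ) :
    (∀ t : ℝ, (t ≠ 0 ∨ 1 ≤ μ) →
      Tendsto (fun σ : ℝ => kTilde σ μ t) atTop
        (𝓝 ((4 * μ - 3) / 2 * (t ^ 2) ^ (2 * μ - 2)))) ∧
    (∀ t : ℝ, (t ≠ 0 ∨ 1 ≤ μ) → 0 ≤ (4 * μ - 3) / 2 * (t ^ 2) ^ (2 * μ - 2)) ∧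
    (∫ t in (-1 : ℝ)..1, (4 * μ - 3) / 2 * (t ^ 2) ^ (2 * μ - 2) = 1) := by
  refine ⟨fun t _ => tendsto_kTilde_atTop hμ t, fun t _ => ?_, integral_beta_density hμ⟩
  exact mul_nonneg (by linarith) (Real.rpow_nonneg (sq_nonneg t) _)

/-- For fixed `μ ≥ 1` and `t ∈ [-1,1]`, `k̃_{σ,μ}(t) → ((4μ-3)/2)(t²)^{2μ-2}` as
`σ → ∞`; the limiting function is a beta-type probability density on `[-1,1]`. -/
theorem kTilde_tendsto_beta (μ : ℝ) (hμ : 1 ≤ μ) :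
    (∀ t ∈ Set.Icc (-1:ℝ) 1,
      Tendsto (fun σ : ℝ => kTilde σ μ t) atTop
        (nhds ((4 * μ - 3) / 2 * (t ^ 2) ^ (2 * μ - 2)))) ∧
    (∀ t ∈ Set.Icc (-1:ℝ) 1, 0 ≤ (4 * μ - 3) / 2 * (t ^ 2) ^ (2 * μ - 2)) ∧
    (∫ t in (-1:ℝ)..1, (4 * μ - 3) / 2 * (t ^ 2) ^ (2 * μ - 2) = 1) := by
  obtain ⟨limit, nonneg, mass⟩ := kTilde_tendsto_beta_general (μ := μ) (by linarith)
  exact ⟨fun t _ => limit t (Or.inr hμ), fun t _ => nonneg t (Or.inr hμ), mass⟩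
end

section
/- General unisolvency: let v₁, v₂, v₃ ∈ ℝ² be affinely independent with barycentric coordinates λᵢ (λᵢ(vⱼ) = δᵢⱼ), let γⱼ(t) = ((1+t)/2) v_{j+1} + ((1-t)/2) v_{j+2} (indices modulo 3). Let ω be an integrable probability density on [-1,1] (ω ≥ 0, ∫_{-1}^{1} ω = 1) with finite moments of all orders, and let q : ℝ → ℝ be a polynomial satisfying ∫_{-1}^{1} q(t) ω(t) dt = 0, ∫_{-1}^{1} t q(t) ω(t) dt = 0, and ∫_{-1}^{1} t² q(t) ω(t) dt ≠ 0. Define I_j^ω(f) = ∫_{-1}^{1} f(γⱼ(t)) ω(t) dt and L_j^ω(f) = ∫_{-1}^{1} q(t) f(γⱼ(t)) ω(t) dt, j = 1,2,3. If p₂ = Σᵢ₌₁³ aᵢ λᵢ + Σᵢ₌₁³ bᵢ λᵢ² with real coefficients aᵢ, bᵢ satisfies I_j^ω(p₂) = 0 and L_j^ω(p₂) = 0 for j = 1,2,3, then a₁ = a₂ = a₃ = b₁ = b₂ = b₃ = 0, and hence p₂ is the zero function. -/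
open MeasureTheory

/-- Parametrization of the edge `s_j` of the triangle, opposite to the vertex `v j`
(indices taken cyclically in `Fin 3`). -/
noncomputable def edgeParam (v : Fin 3 → ℝ × ℝ) (j : Fin 3) (t : ℝ) : ℝ × ℝ :=
  ((1 + t) / 2) • v (j + 1) + ((1 - t) / 2) • v (j + 2)

/-!
On an edge of the triangle, `p₂` is a quadratic polynomial in `t` whose leading coefficient is
`(b k + b l) / 4`, where `k`, `l` are the endpoints. The weight `q ω` annihilates `1` and `t`, so
`L` isolates this coefficient and `b k + b l = 0` on every edge; since the triangle is an odd cycle,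
`b = 0`. Now `p₂` is linear on each edge, and `I` gives `x * a l + y * a k = 0` with `x + y = ∫ ω`.
Going once around the cycle, `(x ^ 3 + y ^ 3) * a i = 0`, and `x ^ 3 + y ^ 3 ≠ 0` because
`x + y ≠ 0`.
-/

section CyclicRelation

variable {ι R : Type*} [CommRing R] {σ : ι → ι} {x y : R} {f : ι → R}

lemma pow_mul_eq_neg_pow_mul_iterate (h : ∀ i, x * f i + y * f (σ i) = 0) (n : ℕ) (i : ι) :
    x ^ n * f i = (-y) ^ n * f (σ^[n] i) := by
  induction n generalizing i with
  | zero => simp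
  | succ n ih =>
    rw [Function.iterate_succ_apply]
    linear_combination x ^ n * h i - y * ih (σ i)

lemma eq_zero_of_mul_add_mul_eq_zero_of_odd_iterate [LinearOrder R] [IsStrictOrderedRing R]
    (h : ∀ i, x * f i + y * f (σ i) = 0) (hxy : x + y ≠ 0) {n : ℕ} (hn : Odd n) {i : ι}
    (hσ : σ^[n] i = i) : f i = 0 := by
  have hturn : x ^ n * f i = (-y) ^ n * f i := by
    simpa only [hσ] using pow_mul_eq_neg_pow_mul_iterate h n i
  have hpow : x ^ n ≠ (-y) ^ n := fun hp =>
    hxy (eq_neg_iff_add_eq_zero.mp (hn.pow_injective hp))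
  by_contra hf
  exact hpow (mul_right_cancel₀ hf hturn)

lemma fin_three_eq_zero_of_mul_add_mul_eq_zero [LinearOrder R] [IsStrictOrderedRing R]
    {c : Fin 3 → R} (h : ∀ j, x * c (j + 1) + y * c (j + 2) = 0) (hxy : x + y ≠ 0) (i : Fin 3) :
    c i = 0 := by
  have hsucc : ∀ i, x * c i + y * c (i + 1) = 0 :=
    (add_right_surjective 1).forall.mpr fun j => by
      rw [show j + 1 + 1 = j + 2 from add_assoc j 1 1]
      exact h j
  have hcycle : ∀ i : Fin 3, (· + 1)^[3] i = i := by decide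
  exact eq_zero_of_mul_add_mul_eq_zero_of_odd_iterate hsucc hxy (by decide : Odd 3) (hcycle i)

end CyclicRelation

section EdgeRestriction

variable {ι R K V P : Type*} [DecidableEq ι] [Ring R] [Field K] [AddCommGroup V] [Module R V]
  [Module K V] [AddTorsor V P] {v : ι → P}

lemma dual_apply_lineMap {lam : ι → P →ᵃ[R] R}
    (hlam : ∀ i j, lam i (v j) = if i = j then 1 else 0) (i k l : ι) (s : R) :
    lam i (AffineMap.lineMap (v k) (v l) s) =
      (1 - s) * (if i = k then 1 else 0) + s * (if i = l then 1 else 0) := by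
  rw [AffineMap.apply_lineMap, AffineMap.lineMap_apply_module, hlam, hlam, smul_eq_mul, smul_eq_mul]

lemma sum_dual_apply_lineMap [Fintype ι] {lam : ι → P →ᵃ[R] R}
    (hlam : ∀ i j, lam i (v j) = if i = j then 1 else 0)
    {M : Type*} [AddCommMonoid M] {g : ι → R → M} (hg : ∀ i, g i 0 = 0) {k l : ι} (hkl : k ≠ l)
    (s : R) : ∑ i, g i (lam i (AffineMap.lineMap (v k) (v l) s)) = g k (1 - s) + g l s := by
  simp only [dual_apply_lineMap hlam]
  rw [Fintype.sum_eq_add k l hkl fun i hi => by simp [hi.1, hi.2, hg]]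
  simp [hkl, hkl.symm]

lemma quadratic_apply_edge [Fintype ι] [NeZero (2 : K)] {lam : ι → P →ᵃ[K] K}
    (hlam : ∀ i j, lam i (v j) = if i = j then 1 else 0)
    (a b : ι → K) {k l : ι} (hkl : k ≠ l) (t : K) :
    ∑ i, a i * lam i (AffineMap.lineMap (v k) (v l) ((1 + t) / 2)) +
        ∑ i, b i * lam i (AffineMap.lineMap (v k) (v l) ((1 + t) / 2)) ^ 2 =
      ((a l + a k) / 2 + (b l + b k) / 4) + ((a l - a k) / 2 + (b l - b k) / 2) * t +
        (b l + b k) / 4 * t ^ 2 := by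
  have h2 : (2 : K) ≠ 0 := two_ne_zero
  have h4 : (4 : K) ≠ 0 := by simpa only [← two_add_two_eq_four, ← two_mul] using mul_ne_zero h2 h2
  rw [sum_dual_apply_lineMap hlam (g := fun i s => a i * s) (fun _ => mul_zero _) hkl,
    sum_dual_apply_lineMap hlam (g := fun i s => b i * s ^ 2) (fun _ => by simp) hkl]
  field_simp
  ring

end EdgeRestriction

lemma edgeParam_eq_lineMap (v : Fin 3 → ℝ × ℝ) (j : Fin 3) (t : ℝ) :
    edgeParam v j t = AffineMap.lineMap (v (j + 2)) (v (j + 1)) ((1 + t) / 2) := by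
  rw [AffineMap.lineMap_apply_module, edgeParam, add_comm]
  congr 2
  ring

lemma integral_quadratic_mul {μ : Measure ℝ} {ω : ℝ → ℝ}
    (hω : ∀ m ≤ 2, Integrable (fun t => t ^ m * ω t) μ) (c₀ c₁ c₂ : ℝ) :
    ∫ t, (c₀ + c₁ * t + c₂ * t ^ 2) * ω t ∂μ =
      c₀ * ∫ t, ω t ∂μ + c₁ * ∫ t, t * ω t ∂μ + c₂ * ∫ t, t ^ 2 * ω t ∂μ := by
  have h₀ : Integrable ω μ := by simpa using hω 0 zero_le_two
  have h₁ : Integrable (fun t => t * ω t) μ := by simpa using hω 1 one_le_two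
  have h₂ : Integrable (fun t => t ^ 2 * ω t) μ := hω 2 le_rfl
  have h₀₁ : Integrable (fun t => c₀ * ω t + c₁ * (t * ω t)) μ :=
    (h₀.const_mul c₀).add (h₁.const_mul c₁)
  simp only [add_mul, mul_assoc]
  rw [integral_add h₀₁ (h₂.const_mul c₂), integral_add (h₀.const_mul c₀) (h₁.const_mul c₁)]
  simp only [integral_const_mul]

/-- `η` stands for the weight `q ω`. -/
theorem unisolvent_general_general {V P : Type*} [AddCommGroup V] [Module ℝ V] [AddTorsor V P]
    {v : Fin 3 → P} {lam : Fin 3 → P →ᵃ[ℝ] ℝ}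
    (hlam : ∀ i j, lam i (v j) = if i = j then 1 else 0) {μ : Measure ℝ} {ω η : ℝ → ℝ}
    (hω : ∀ m ≤ 2, Integrable (fun t => t ^ m * ω t) μ)
    (hη : ∀ m ≤ 2, Integrable (fun t => t ^ m * η t) μ)
    (hω₀ : ∫ t, ω t ∂μ ≠ 0) (hη₀ : ∫ t, η t ∂μ = 0) (hη₁ : ∫ t, t * η t ∂μ = 0)
    (hη₂ : ∫ t, t ^ 2 * η t ∂μ ≠ 0) {a b : Fin 3 → ℝ}
    (hI : ∀ j : Fin 3, ∫ t,
      (∑ i, a i * lam i (AffineMap.lineMap (v (j + 2)) (v (j + 1)) ((1 + t) / 2)) +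
        ∑ i, b i * lam i (AffineMap.lineMap (v (j + 2)) (v (j + 1)) ((1 + t) / 2)) ^ 2) *
          ω t ∂μ = 0)
    (hL : ∀ j : Fin 3, ∫ t,
      (∑ i, a i * lam i (AffineMap.lineMap (v (j + 2)) (v (j + 1)) ((1 + t) / 2)) +
        ∑ i, b i * lam i (AffineMap.lineMap (v (j + 2)) (v (j + 1)) ((1 + t) / 2)) ^ 2) *
          η t ∂μ = 0) :
    (∀ i, a i = 0) ∧ (∀ i, b i = 0) ∧
      ∀ x, ∑ i, a i * lam i x + ∑ i, b i * lam i x ^ 2 = 0 := by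
  have hne : ∀ j : Fin 3, j + 2 ≠ j + 1 := by decide
  simp only [quadratic_apply_edge hlam a b (hne _), integral_quadratic_mul hω,
    integral_quadratic_mul hη, hη₀, hη₁, mul_zero, zero_add] at hI hL
  have hb : ∀ i, b i = 0 := by
    refine fin_three_eq_zero_of_mul_add_mul_eq_zero (x := 1) (y := 1) (fun j => ?_) (by simp)
    have hlead : (b (j + 1) + b (j + 2)) / 4 = 0 := (mul_eq_zero.mp (hL j)).resolve_right hη₂
    linear_combination 4 * hlead
  have ha : ∀ i, a i = 0 := by
    refine fin_three_eq_zero_of_mul_add_mul_eq_zero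
      (x := (∫ t, ω t ∂μ + ∫ t, t * ω t ∂μ) / 2) (y := (∫ t, ω t ∂μ - ∫ t, t * ω t ∂μ) / 2)
      (fun j => ?_) (by ring_nf; exact hω₀)
    have hj := hI j
    simp only [hb] at hj
    linear_combination hj
  exact ⟨ha, hb, fun x => by simp [ha, hb]⟩

/-- General unisolvency: for any probability density `ω` on `[-1,1]` with finite
moments of all orders and any polynomial `q` with `∫ q ω = ∫ t q ω = 0` and
`∫ t² q ω ≠ 0`, a quadratic `p₂ = Σ aᵢ λᵢ + Σ bᵢ λᵢ²` annihilated by the six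
enriched edge functionals must be zero. -/
theorem unisolvent_general (v : Fin 3 → ℝ × ℝ) (hv : AffineIndependent ℝ v)
    (lam : Fin 3 → ℝ × ℝ → ℝ)
    (hlam : ∀ i, ∃ A : (ℝ × ℝ) →ᵃ[ℝ] ℝ, ∀ x, lam i x = A x)
    (hkr : ∀ i j, lam i (v j) = if i = j then (1:ℝ) else 0)
    (ω : ℝ → ℝ)
    (hInt : IntervalIntegrable ω volume (-1) 1)
    (hnn : ∀ t ∈ Set.Icc (-1:ℝ) 1, 0 ≤ ω t)
    (hone : ∫ t in (-1:ℝ)..1, ω t = 1)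
    (hmom : ∀ m : ℕ, IntervalIntegrable (fun t => t ^ m * ω t) volume (-1) 1)
    (q : Polynomial ℝ)
    (hq0 : ∫ t in (-1:ℝ)..1, q.eval t * ω t = 0)
    (hq1 : ∫ t in (-1:ℝ)..1, t * q.eval t * ω t = 0)
    (hq2 : (∫ t in (-1:ℝ)..1, t ^ 2 * q.eval t * ω t) ≠ 0)
    (a b : Fin 3 → ℝ)
    (hI : ∀ j : Fin 3,
      ∫ t in (-1:ℝ)..1,
        ((∑ i : Fin 3, a i * lam i (edgeParam v j t))
          + ∑ i : Fin 3, b i * (lam i (edgeParam v j t)) ^ 2) * ω t = 0)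
    (hL : ∀ j : Fin 3,
      ∫ t in (-1:ℝ)..1,
        q.eval t *
          ((∑ i : Fin 3, a i * lam i (edgeParam v j t))
            + ∑ i : Fin 3, b i * (lam i (edgeParam v j t)) ^ 2) * ω t = 0) :
    (∀ i, a i = 0) ∧ (∀ i, b i = 0) ∧
      ∀ x : ℝ × ℝ, (∑ i : Fin 3, a i * lam i x) + ∑ i : Fin 3, b i * (lam i x) ^ 2 = 0 := by
  choose A hA using hlam
  obtain rfl : lam = fun i => ⇑(A i) := funext fun i => funext (hA i)
  simp only [edgeParam_eq_lineMap, intervalIntegral.integral_of_le (neg_le_self zero_le_one)]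
    at hone hq0 hq1 hq2 hI hL
  exact unisolvent_general_general (η := fun t => q.eval t * ω t) hkr (fun m _ => (hmom m).1)
    (fun m _ => ((hInt.continuousOn_mul q.continuousOn).continuousOn_mul (continuousOn_pow m)).1)
    (hone.trans_ne one_ne_zero) hq0 (by simpa only [mul_assoc] using hq1)
    (by simpa only [mul_assoc] using hq2) hI fun j => by
      simpa only [mul_assoc, mul_left_comm] using hL j
end

section
/- General basis functions for even densities: let v₁, v₂, v₃ ∈ ℝ² be affinely independent with barycentric coordinates λᵢ (λᵢ(vⱼ) = δᵢⱼ), γⱼ(t) = ((1+t)/2) v_{j+1} + ((1-t)/2) v_{j+2} (indices modulo 3). Let ω be an even integrable probability density on [-1,1] with finite moments, let μ_{2,ω} = ∫_{-1}^{1} t² ω(t) dt, and set q(t) = t² - μ_{2,ω}, ‖q‖²_{2,ω} = ∫_{-1}^{1} q(t)² ω(t) dt, and assume ‖q‖²_{2,ω} ≠ 0. Define φ_{ω,i} = 1 - 2λᵢ and ψ_{ω,i} = -A_ω φ_{ω,i} + (2/‖q‖²_{2,ω})(-λᵢ² + λ_{i+1}² + λ_{i+2}²), where A_ω = (1 + μ_{2,ω})/‖q‖²_{2,ω}.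 Then for all i, j ∈ {1,2,3}: I_j^ω(φ_{ω,i}) = δᵢⱼ, L_j^ω(φ_{ω,i}) = 0, I_j^ω(ψ_{ω,i}) = 0, and L_j^ω(ψ_{ω,i}) = δᵢⱼ, where I_j^ω(f) = ∫_{-1}^{1} f(γⱼ(t)) ω(t) dt and L_j^ω(f) = ∫_{-1}^{1} q(t) f(γⱼ(t)) ω(t) dt. -/
/-!
On its own side, `φ i` is constantly `1` and `ψ i` is `q / ‖q‖²`; on each of the other two sides
both are constant multiples of `t`. Against an even weight of mass one, the four identities hence
reduce to `∫ ω = 1`, `∫ q ω = 0`, `∫ q² ω = ‖q‖²` and the vanishing of integrals of odd functions.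
-/

open MeasureTheory

section Integrals

variable {a b : ℝ}

theorem integral_eq_zero_of_odd {E : Type*} [NormedAddCommGroup E] [NormedSpace ℝ E]
    {f : ℝ → E} (hf : f.Odd) : ∫ t in -a..a, f t = 0 := by
  have : IsAddTorsionFree E := .of_isTorsionFree ℝ E
  have hneg : -∫ t in -a..a, f t = ∫ t in -a..a, f t := by
    simpa only [hf _, intervalIntegral.integral_neg, neg_neg] using
      intervalIntegral.integral_comp_neg (a := -a) (b := a) f
  exact neg_eq_self.mp hneg

theorem integral_sub_mean_mul_eq_zero {μ : Measure ℝ} {g ω : ℝ → ℝ}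
    (hω : IntervalIntegrable ω μ a b) (hone : ∫ t in a..b, ω t ∂μ = 1)
    (hgω : IntervalIntegrable (fun t => g t * ω t) μ a b) :
    ∫ t in a..b, (g t - ∫ s in a..b, g s * ω s ∂μ) * ω t ∂μ = 0 := by
  simp only [sub_mul]
  rw [intervalIntegral.integral_sub hgω (hω.const_mul _), intervalIntegral.integral_const_mul,
    hone, mul_one, sub_self]

end Integrals

section Triangle

variable {V P : Type*} [AddCommGroup V] [Module ℝ V] [AddTorsor V P]

/-- The point with parameter `t` on the side opposite to `v j` of a triangle in a real affine
space, running from `v (j + 2)` at `t = -1` to `v (j + 1)` at `t = 1`. -/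
noncomputable def sidePoint (v : Fin 3 → P) (j : Fin 3) (t : ℝ) : P :=
  AffineMap.lineMap (v (j + 2)) (v (j + 1)) ((1 + t) / 2)

theorem edgeParam_eq_sidePoint (v : Fin 3 → ℝ × ℝ) (j : Fin 3) (t : ℝ) :
    edgeParam v j t = sidePoint v j t := by
  have ht : (1 - t) / 2 = 1 - (1 + t) / 2 := by ring
  rw [edgeParam, sidePoint, AffineMap.lineMap_apply_module, add_comm, ht]

theorem affineMap_apply_sidePoint (f : P →ᵃ[ℝ] ℝ) (v : Fin 3 → P) (j : Fin 3) (t : ℝ) :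
    f (sidePoint v j t) = (1 + t) / 2 * f (v (j + 1)) + (1 - t) / 2 * f (v (j + 2)) := by
  rw [sidePoint, AffineMap.apply_lineMap, AffineMap.lineMap_apply_ring']
  ring

/-- The basis function `φᵢ = 1 - 2λᵢ`, dual to the mean value over side `i`. -/
def linearBasis (lam : Fin 3 → P →ᵃ[ℝ] ℝ) (i : Fin 3) (x : P) : ℝ :=
  1 - 2 * lam i x

/-- The basis function `ψᵢ`, dual to the mean over side `i` weighted by `q t = t ^ 2 - m2`. The
parameters `m2` and `nq` stand for the second moment of the weight and for `‖q‖²`. -/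
noncomputable def quadraticBasis (m2 nq : ℝ) (lam : Fin 3 → P →ᵃ[ℝ] ℝ) (i : Fin 3) (x : P) : ℝ :=
  -((1 + m2) / nq) * linearBasis lam i x
    + (2 / nq) * (-(lam i x) ^ 2 + (lam (i + 1) x) ^ 2 + (lam (i + 2) x) ^ 2)

variable {v : Fin 3 → P} {lam : Fin 3 → P →ᵃ[ℝ] ℝ}
  (hkr : ∀ i j, lam i (v j) = if i = j then 1 else 0)

include hkr

theorem barycentric_sidePoint (i j : Fin 3) (t : ℝ) :
    lam i (sidePoint v j t) =
      if i = j then 0 else if i = j + 1 then (1 + t) / 2 else (1 - t) / 2 := by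
  rw [affineMap_apply_sidePoint, hkr, hkr]
  fin_cases i <;> fin_cases j <;> simp

theorem linearBasis_sidePoint_self (i : Fin 3) (t : ℝ) :
    linearBasis lam i (sidePoint v i t) = 1 := by
  simp [linearBasis, barycentric_sidePoint hkr]

theorem odd_linearBasis_sidePoint {i j : Fin 3} (hij : i ≠ j) :
    (fun t => linearBasis lam i (sidePoint v j t)).Odd := by
  intro t
  simp only [linearBasis, barycentric_sidePoint hkr, if_neg hij]
  split_ifs <;> ring

theorem quadraticBasis_sidePoint_self (m2 nq : ℝ) (i : Fin 3) (t : ℝ) :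
    quadraticBasis m2 nq lam i (sidePoint v i t) = nq⁻¹ * (t ^ 2 - m2) := by
  have hsq : -(lam i (sidePoint v i t)) ^ 2 + (lam (i + 1) (sidePoint v i t)) ^ 2
      + (lam (i + 2) (sidePoint v i t)) ^ 2 = (1 + t ^ 2) / 2 := by
    simp only [barycentric_sidePoint hkr]
    grind
  rw [quadraticBasis, linearBasis_sidePoint_self hkr, hsq]
  ring

theorem quadraticBasis_sidePoint_of_ne (m2 nq : ℝ) {i j : Fin 3} (hij : i ≠ j) (t : ℝ) :
    quadraticBasis m2 nq lam i (sidePoint v j t) =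
      (1 - m2) / nq * linearBasis lam i (sidePoint v j t) := by
  have hj : j = i + 1 ∨ j = i + 2 := by decide +revert
  have hzero : lam j (sidePoint v j t) = 0 := by simp only [barycentric_sidePoint hkr, if_true]
  have hsum : lam i (sidePoint v j t) + lam (i + 1) (sidePoint v j t)
      + lam (i + 2) (sidePoint v j t) = 1 := by
    simp only [barycentric_sidePoint hkr]
    grind
  -- If `k` is the third index, then `λₖ² - λᵢ² = (λₖ - λᵢ)(λₖ + λᵢ) = λₖ - λᵢ = 1 - 2λᵢ`.
  have hsq : -(lam i (sidePoint v j t)) ^ 2 + (lam (i + 1) (sidePoint v j t)) ^ 2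
      + (lam (i + 2) (sidePoint v j t)) ^ 2 = linearBasis lam i (sidePoint v j t) := by
    rcases hj with rfl | rfl <;> rw [hzero] at hsum ⊢ <;> rw [linearBasis] <;> grind
  rw [quadraticBasis, hsq]
  ring

theorem odd_quadraticBasis_sidePoint (m2 nq : ℝ) {i j : Fin 3} (hij : i ≠ j) :
    (fun t => quadraticBasis m2 nq lam i (sidePoint v j t)).Odd := by
  intro t
  simp only [quadraticBasis_sidePoint_of_ne hkr m2 nq hij, odd_linearBasis_sidePoint hkr hij t,
    mul_neg]

end Triangle

theorem basis_general_even_general {V P : Type*} [AddCommGroup V] [Module ℝ V] [AddTorsor V P]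
    (v : Fin 3 → P) (lam : Fin 3 → P → ℝ)
    (hlam : ∀ i, ∃ A : P →ᵃ[ℝ] ℝ, ∀ x, lam i x = A x)
    (hkr : ∀ i j, lam i (v j) = if i = j then (1 : ℝ) else 0)
    (ω : ℝ → ℝ)
    (hInt : IntervalIntegrable ω volume (-1) 1)
    (hone : ∫ t in (-1 : ℝ)..1, ω t = 1)
    (heven : ω.Even)
    (m2 : ℝ) (hm2 : m2 = ∫ t in (-1 : ℝ)..1, t ^ 2 * ω t)
    (q : ℝ → ℝ) (hq : ∀ t, q t = t ^ 2 - m2)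
    (nq : ℝ) (hnq : nq = ∫ t in (-1 : ℝ)..1, q t ^ 2 * ω t) (hnq0 : nq ≠ 0)
    (A : ℝ) (hA : A = (1 + m2) / nq)
    (φ : Fin 3 → P → ℝ) (hφ : ∀ i x, φ i x = 1 - 2 * lam i x)
    (ψ : Fin 3 → P → ℝ)
    (hψ : ∀ i x, ψ i x = -A * φ i x
      + (2 / nq) * (-(lam i x) ^ 2 + (lam (i + 1) x) ^ 2 + (lam (i + 2) x) ^ 2))
    (i j : Fin 3) :
    (∫ t in (-1 : ℝ)..1, φ i (sidePoint v j t) * ω t = if i = j then (1 : ℝ) else 0) ∧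
    (∫ t in (-1 : ℝ)..1, q t * φ i (sidePoint v j t) * ω t = 0) ∧
    (∫ t in (-1 : ℝ)..1, ψ i (sidePoint v j t) * ω t = 0) ∧
    (∫ t in (-1 : ℝ)..1, q t * ψ i (sidePoint v j t) * ω t = if i = j then (1 : ℝ) else 0) := by
  choose L hL using hlam
  simp only [hL] at hkr
  obtain rfl : φ = linearBasis L := by ext i x; rw [hφ, hL, linearBasis]
  obtain rfl : ψ = quadraticBasis m2 nq L := by ext i x; simp only [hψ, hA, hL, quadraticBasis]
  obtain rfl | hij := eq_or_ne i j
  · have hqω : ∫ t in (-1 : ℝ)..1, q t * ω t = 0 := by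
      simpa only [hq, hm2] using integral_sub_mean_mul_eq_zero hInt hone
        (hInt.continuousOn_mul (continuous_pow 2).continuousOn)
    simp only [linearBasis_sidePoint_self hkr, quadraticBasis_sidePoint_self hkr, ← hq, one_mul,
      mul_one, if_true]
    refine ⟨hone, hqω, ?_, ?_⟩
    · simp only [mul_assoc, intervalIntegral.integral_const_mul, hqω, mul_zero]
    · calc
        ∫ t in (-1 : ℝ)..1, q t * (nq⁻¹ * q t) * ω t
            = ∫ t in (-1 : ℝ)..1, nq⁻¹ * (q t ^ 2 * ω t) := by congr with t; ring
        _ = nq⁻¹ * nq := by rw [intervalIntegral.integral_const_mul, ← hnq]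
        _ = 1 := inv_mul_cancel₀ hnq0
  · have hq_even : q.Even := fun t => by simp only [hq, even_two.neg_pow]
    have hφ_odd := odd_linearBasis_sidePoint hkr hij
    have hψ_odd := odd_quadraticBasis_sidePoint hkr m2 nq hij
    simp only [if_neg hij]
    exact ⟨integral_eq_zero_of_odd (hφ_odd.mul_even heven),
      integral_eq_zero_of_odd ((hq_even.mul_odd hφ_odd).mul_even heven),
      integral_eq_zero_of_odd (hψ_odd.mul_even heven),
      integral_eq_zero_of_odd ((hq_even.mul_odd hψ_odd).mul_even heven)⟩

/-- General basis functions for an even probability density `ω` on `[-1,1]`: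
with `q(t) = t² - μ_{2,ω}`, `‖q‖²_{2,ω} = ∫ q² ω ≠ 0`,
`A_ω = (1 + μ_{2,ω})/‖q‖²_{2,ω}`, the functions `φ_{ω,i} = 1 - 2λᵢ` and
`ψ_{ω,i} = -A_ω φ_{ω,i} + (2/‖q‖²_{2,ω})(-λᵢ² + λ_{i+1}² + λ_{i+2}²)`
form the dual basis of the enriched edge functionals `I_j^ω, L_j^ω`. -/
theorem basis_general_even (v : Fin 3 → ℝ × ℝ) (hv : AffineIndependent ℝ v)
    (lam : Fin 3 → ℝ × ℝ → ℝ)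
    (hlam : ∀ i, ∃ A : (ℝ × ℝ) →ᵃ[ℝ] ℝ, ∀ x, lam i x = A x)
    (hkr : ∀ i j, lam i (v j) = if i = j then (1:ℝ) else 0)
    (ω : ℝ → ℝ)
    (hInt : IntervalIntegrable ω volume (-1) 1)
    (hnn : ∀ t ∈ Set.Icc (-1:ℝ) 1, 0 ≤ ω t)
    (hone : ∫ t in (-1:ℝ)..1, ω t = 1)
    (heven : ∀ t, ω (-t) = ω t)
    (hmom : ∀ m : ℕ, IntervalIntegrable (fun t => t ^ m * ω t) volume (-1) 1)
    (m2 : ℝ) (hm2 : m2 = ∫ t in (-1:ℝ)..1, t ^ 2 * ω t)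
    (q : ℝ → ℝ) (hq : ∀ t, q t = t ^ 2 - m2)
    (nq : ℝ) (hnq : nq = ∫ t in (-1:ℝ)..1, (q t) ^ 2 * ω t) (hnq0 : nq ≠ 0)
    (A : ℝ) (hA : A = (1 + m2) / nq)
    (φ : Fin 3 → ℝ × ℝ → ℝ) (hφ : ∀ i x, φ i x = 1 - 2 * lam i x)
    (ψ : Fin 3 → ℝ × ℝ → ℝ)
    (hψ : ∀ i x, ψ i x = -A * φ i x
      + (2 / nq) * (-(lam i x) ^ 2 + (lam (i + 1) x) ^ 2 + (lam (i + 2) x) ^ 2))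
    (i j : Fin 3) :
    (∫ t in (-1:ℝ)..1, φ i (edgeParam v j t) * ω t = if i = j then (1:ℝ) else 0) ∧
    (∫ t in (-1:ℝ)..1, q t * φ i (edgeParam v j t) * ω t = 0) ∧
    (∫ t in (-1:ℝ)..1, ψ i (edgeParam v j t) * ω t = 0) ∧
    (∫ t in (-1:ℝ)..1, q t * ψ i (edgeParam v j t) * ω t
        = if i = j then (1:ℝ) else 0) := by
  simpa only [edgeParam_eq_sidePoint] using basis_general_even_general v lam hlam hkr ω hInt hone
    heven m2 hm2 q hq nq hnq hnq0 A hA φ hφ ψ hψ i j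
end
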